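/- Let q > 3 be a prime with q ≡ 4 or 5 (mod 9), let p be a prime with p ≡ 1 (mod 3) and p ≠ q, and let L, M be integers with 4p = L² + 27M². Then q^{(p−1)/3} ≡ −(L + 3M)·(6M)⁻¹ (mod p) if and only if there exists an integer t such that (t³ − 3t² − 9t + 3)·L ≡ 3(t³ + 9t² − 9t − 9)·M (mod q). -/

import Mathlib

/-!
Write `z` for the primary element of norm `p` in `ℤ[ω]` attached to `(L, M)`, and `ε = ±1` for the
sign with `q ≡ 4ε (mod 9)`. The cubic residue character `χ` modulo `z`, reduced into an
algebraically closed field `K` of characteristic `q`, has Gauss sums `g χ` and `g χ⁻¹`. Their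
quotient `u` satisfies `u³ = z / z̄`, because `g χ ^ 3` is `p` times a primary Jacobi sum, and
`u ^ q = (χ(q) u) ^ ε`, because the Frobenius map twists Gauss sums by characters.

Every cube root `ζ` of `ω` in `K` is a ninth root of unity, so `q ≡ 4ε (mod 9)` gives
`ζ ^ q = (ω ζ) ^ ε`. Hence `χ(q) = ω` exactly when `y = u / ζ` satisfies `y ^ q = y ^ ε`. With
`s = 2ω + 1 = √-3`, for which `s ^ q = ε s`, the Cayley transform `y = (t - s) / (t + s)` turns this
condition into `t ∈ 𝔽_q`, and `u³ = ω y³` into `z (t + s)³ = ω z̄ (t - s)³`, which is the cubic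
congruence for the slope `t`.
-/

open QuadraticAlgebra

section PowerResidueCharacter

variable {F R A : Type*} [Field F] [CommRing R] [CommRing A] {ζ : R} {n : ℕ} [NeZero n]

theorem injOn_pow_eq_one_of_isPrimitiveRoot_map [IsDomain R] {f : R →+* A}
    (hζ : IsPrimitiveRoot ζ n) (hfζ : IsPrimitiveRoot (f ζ) n) : Set.InjOn f {x | x ^ n = 1} := by
  intro x hx y hy hxy
  obtain ⟨i, hi, rfl⟩ := hζ.eq_pow_of_pow_eq_one hx
  obtain ⟨j, hj, rfl⟩ := hζ.eq_pow_of_pow_eq_one hy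
  rw [map_pow, map_pow] at hxy
  rw [hfζ.pow_inj hi hj hxy]

theorem orderOf_ringHomComp [IsDomain R] {f : R →+* A} (hζ : IsPrimitiveRoot ζ n)
    (hfζ : IsPrimitiveRoot (f ζ) n) {χ : MulChar F R} (hχ : χ ^ n = 1) :
    orderOf (χ.ringHomComp f) = orderOf χ := by
  refine orderOf_eq_orderOf_iff.2 fun k ↦ ?_
  rw [MulChar.ringHomComp_pow]
  refine ⟨fun hk ↦ MulChar.ext fun x ↦ ?_, fun hk ↦ by rw [hk, MulChar.ringHomComp_one]⟩
  have hx : (χ ^ k) x ^ n = 1 := by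
    rw [← MulChar.pow_apply_coe, pow_right_comm, hχ, one_pow, MulChar.one_apply_coe]
  rw [MulChar.one_apply_coe]
  refine injOn_pow_eq_one_of_isPrimitiveRoot_map hζ hfζ hx (one_pow n) ?_
  rw [← MulChar.ringHomComp_apply, hk, MulChar.one_apply_coe, map_one]

theorem exists_mulChar_map_eq_pow [Fintype F] {f : R →+* F} (hζ : IsPrimitiveRoot ζ n)
    (hfζ : IsPrimitiveRoot (f ζ) n) :
    ∃ χ : MulChar F R, orderOf χ = n ∧ ∀ x, f (χ x) = x ^ ((Fintype.card F - 1) / n) := by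
  classical
  obtain ⟨g, hg⟩ := IsCyclic.exists_generator (α := Fˣ)
  have hn : n ∣ Fintype.card F - 1 := hfζ.dvd_of_pow_eq_one _
    (FiniteField.pow_card_sub_one_eq_one _ (hfζ.ne_zero (NeZero.ne n)))
  set m := (Fintype.card F - 1) / n
  have hmn : Fintype.card Fˣ = m * n := by
    rw [Fintype.card_units, Nat.div_mul_cancel hn]
  have hgm : IsPrimitiveRoot ((g : F) ^ m) n := by
    have hg_order : orderOf g = m * n := by
      rw [orderOf_eq_card_of_forall_mem_zpowers hg, Nat.card_eq_fintype_card, hmn]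
    exact ((IsPrimitiveRoot.orderOf g).pow (orderOf_pos g) hg_order).map_of_injective
      Units.coeHom_injective
  obtain ⟨i, -, hi⟩ := hfζ.eq_pow_of_pow_eq_one hgm.pow_eq_one
  have hζi : (ζ ^ i) ^ n = 1 := by rw [pow_right_comm, hζ.pow_eq_one, one_pow]
  have hmem : Units.ofPowEqOne (ζ ^ i) n hζi (NeZero.ne n) ∈ rootsOfUnity (Fintype.card Fˣ) R := by
    rw [mem_rootsOfUnity, hmn, pow_mul', Units.pow_ofPowEqOne, one_pow]
  have hχg : MulChar.ofRootOfUnity hmem hg g = ζ ^ i := MulChar.ofRootOfUnity_spec hmem hg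
  set χ := MulChar.ofRootOfUnity hmem hg
  refine ⟨χ, Nat.dvd_antisymm (orderOf_dvd_of_pow_eq_one ?_) (hgm.dvd_of_pow_eq_one _ ?_), ?_⟩
  · rw [MulChar.eq_iff hg, MulChar.pow_apply_coe, hχg, hζi, MulChar.one_apply_coe]
  · rw [← hi, ← map_pow, ← hχg, ← map_pow, ← MulChar.pow_apply_coe, pow_orderOf_eq_one,
      MulChar.one_apply_coe, map_one]
  · have hcomp : χ.ringHomComp f = MulChar.ofUnitHom (powMonoidHom m) := by
      rw [MulChar.eq_iff hg, MulChar.ringHomComp_apply, hχg, map_pow, hi, MulChar.ofUnitHom_coe,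
        powMonoidHom_apply, Units.val_pow_eq_pow_val]
    intro x
    rcases eq_or_ne x 0 with rfl | hx
    · have hm : m ≠ 0 := left_ne_zero_of_mul (hmn ▸ Fintype.card_ne_zero)
      rw [χ.map_zero, map_zero, zero_pow hm]
    · lift x to Fˣ using hx.isUnit
      rw [← MulChar.ringHomComp_apply, hcomp, MulChar.ofUnitHom_coe, powMonoidHom_apply,
        Units.val_pow_eq_pow_val]

end PowerResidueCharacter

section GaussSum

theorem sum_pow_mul_one_sub_pow_eq_zero {F : Type*} [Field F] [Fintype F] {m n : ℕ}
    (h : m + n < Fintype.card F - 1) : ∑ x : F, x ^ m * (1 - x) ^ n = 0 := by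
  have expand (x : F) : x ^ m * (1 - x) ^ n =
      ∑ i ∈ Finset.range (n + 1), ((-1) ^ i * n.choose i) * x ^ (m + i) := by
    rw [sub_eq_neg_add, add_pow, Finset.mul_sum]
    refine Finset.sum_congr rfl fun i _ ↦ ?_
    rw [neg_pow]
    ring
  simp_rw [expand]
  rw [Finset.sum_comm]
  refine Finset.sum_eq_zero fun i hi ↦ ?_
  have hi' : m + i < Fintype.card F - 1 := by
    have := Finset.mem_range.1 hi
    omega
  rw [← Finset.mul_sum, FiniteField.sum_pow_lt_card_sub_one F _ hi', mul_zero]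

theorem gaussSum_pow_char {R R' : Type*} [CommRing R] [Fintype R] [CommRing R'] {q : ℕ}
    [Fact q.Prime] [CharP R' q] (hq : IsUnit (q : R)) (χ : MulChar R R') (ψ : AddChar R R') :
    (χ ^ q) q * gaussSum χ ψ ^ q = gaussSum (χ ^ q) ψ := by
  rw [gaussSum_frob, AddChar.pow_mulShift, ← hq.unit_spec, gaussSum_mulShift]

variable {F K : Type*} [Field F] [Fintype F] [Field K] {χ : MulChar F K}

theorem gaussSum_pow_three {ψ : AddChar F K} (hχ : orderOf χ = 3) (hψ : ψ.IsPrimitive) :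
    gaussSum χ ψ ^ 3 = Fintype.card F * jacobiSum χ χ := by
  have hχ1 : χ (-1) = 1 :=
    MulChar.val_neg_one_eq_one_of_odd_order (n := 3) (by decide) (hχ ▸ pow_orderOf_eq_one χ)
  have := gaussSum_pow_eq_prod_jacobiSum (χ := χ) (by omega) hψ
  simpa [hχ, hχ1] using this

theorem gaussSum_div_gaussSum_inv_pow_three {ψ : AddChar F K} (hF : (Fintype.card F : K) ≠ 0)
    (hχ : orderOf χ = 3) (hψ : ψ.IsPrimitive) :
    (gaussSum χ ψ / gaussSum χ⁻¹ ψ) ^ 3 = jacobiSum χ χ / jacobiSum χ⁻¹ χ⁻¹ := by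
  rw [div_pow, gaussSum_pow_three hχ hψ, gaussSum_pow_three (by rwa [orderOf_inv]) hψ,
    mul_div_mul_left _ _ hF]

theorem gaussSum_div_gaussSum_inv_pow_char {q : ℕ} [Fact q.Prime] [CharP K q] (hq : (q : F) ≠ 0)
    {ε : ℤˣ} (hqε : q ≡ ε [ZMOD 3]) (hχ : orderOf χ = 3) (ψ : AddChar F K) :
    (gaussSum χ ψ / gaussSum χ⁻¹ ψ) ^ q =
      (χ q * (gaussSum χ ψ / gaussSum χ⁻¹ ψ)) ^ (ε : ℤ) := by
  have hpow : χ ^ q = χ ^ (ε : ℤ) := by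
    rwa [← zpow_natCast, zpow_eq_zpow_iff_modEq, hχ]
  have hcube : χ q ^ 3 = 1 := by
    rw [← hχ, ← MulChar.pow_apply' χ (by omega), pow_orderOf_eq_one, MulChar.one_apply hq.isUnit]
  have hχq : χ q ≠ 0 := (hq.isUnit.map χ).ne_zero
  have hg := gaussSum_pow_char hq.isUnit χ ψ
  have hg' := gaussSum_pow_char hq.isUnit χ⁻¹ ψ
  rw [hpow] at hg
  rw [inv_pow, hpow] at hg'
  rw [div_pow, mul_zpow]
  rcases Int.units_eq_one_or ε with rfl | rfl
  · simp only [Units.val_one, zpow_one, MulChar.inv_apply_eq_inv'] at hg hg' ⊢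
    rw [← eq_inv_mul_iff_mul_eq₀ hχq] at hg
    rw [inv_mul_eq_iff_eq_mul₀ hχq] at hg'
    rw [hg, hg', mul_div_mul_comm]
    congr 1
    field_simp
    exact hcube.symm
  · simp only [Units.val_neg, Units.val_one, zpow_neg, zpow_one, inv_inv,
      MulChar.inv_apply_eq_inv'] at hg hg' ⊢
    rw [inv_mul_eq_iff_eq_mul₀ hχq] at hg
    rw [← eq_inv_mul_iff_mul_eq₀ hχq] at hg'
    rw [hg, hg', mul_div_mul_comm, inv_div]
    congr 1
    field_simp
    exact hcube

end GaussSum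

section JacobiSum

theorem map_jacobiSum_eq_zero {F R : Type*} [Field F] [Fintype F] [CommRing R] {f : R →+* F}
    {χ φ : MulChar F R} {m n : ℕ} (hχ : ∀ x, f (χ x) = x ^ m) (hφ : ∀ x, f (φ x) = x ^ n)
    (h : m + n < Fintype.card F - 1) : f (jacobiSum χ φ) = 0 := by
  rw [jacobiSum, map_sum, ← sum_pow_mul_one_sub_pow_eq_zero h]
  simp only [map_mul, hχ, hφ]

end JacobiSum

/-- The ring `ℤ[ω]` of Eisenstein integers, with `ω² = -1 - ω`. Its conjugation is `star`, and an
element prime to `3` is primary when `3` divides its coordinate `im` along `ω`. -/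
abbrev EisensteinInt : Type := QuadraticAlgebra ℤ (-1) (-1)

namespace EisensteinInt

variable {A : Type*} [CommRing A]

theorem norm_eq (z : EisensteinInt) : norm z = z.re ^ 2 - z.re * z.im + z.im ^ 2 := by
  rw [norm_def]
  ring

theorem norm_eq_zero_iff {z : EisensteinInt} : norm z = 0 ↔ z = 0 := by
  refine ⟨fun hz ↦ ?_, fun hz ↦ hz ▸ norm_zero⟩
  rw [norm_eq] at hz
  have him : z.im = 0 := by nlinarith [sq_nonneg (2 * z.re - z.im)]
  have hre : z.re = 0 := by simpa [him] using hz
  exact QuadraticAlgebra.ext hre him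

instance : IsDomain EisensteinInt :=
  have : NoZeroDivisors EisensteinInt := ⟨fun {x y} hxy ↦ by
    simpa only [← norm_eq_zero_iff, map_mul, mul_eq_zero] using hxy⟩
  NoZeroDivisors.to_isDomain _

theorem omega_sq_add_omega_add_one : (ω : EisensteinInt) ^ 2 + ω + 1 = 0 := by
  ext <;> simp [pow_two]

theorem map_omega_sq_add_map_omega_add_one (f : EisensteinInt →+* A) : f ω ^ 2 + f ω + 1 = 0 := by
  rw [← map_pow, ← map_add, ← map_one f, ← map_add, omega_sq_add_omega_add_one, map_zero]

theorem map_eq (f : EisensteinInt →+* A) (z : EisensteinInt) : f z = z.re + z.im * f ω := by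
  conv_lhs => rw [← z.mk_eta, mk_eq_add_smul_omega]
  simp [zsmul_eq_mul]

theorem map_mul_map_star (f : EisensteinInt →+* A) (z : EisensteinInt) :
    f z * f (star z) = norm z := by
  rw [← map_mul, ← algebraMap_norm_eq_mul_star, eq_intCast, map_intCast]

theorem exists_ringHom_omega_eq {w : A} (hw : w ^ 2 + w + 1 = 0) :
    ∃ f : EisensteinInt →+* A, f ω = w := by
  have hw' : w * w = (-1 : ℤ) • (1 : A) + (-1 : ℤ) • w := by
    rw [neg_one_zsmul, neg_one_zsmul]
    linear_combination hw
  exact ⟨lift ⟨w, hw'⟩, by simp [lift]⟩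

theorem isPrimitiveRoot_map_omega (f : EisensteinInt →+* A) (h3 : (3 : A) ≠ 0) :
    IsPrimitiveRoot (f ω) 3 := by
  have hω := map_omega_sq_add_map_omega_add_one f
  have hne : f ω ≠ 1 := by
    intro h
    rw [h] at hω
    exact h3 (by linear_combination hω)
  have : Fact (Nat.Prime 3) := ⟨Nat.prime_three⟩
  have hord : orderOf (f ω) = 3 :=
    orderOf_eq_prime (by linear_combination (f ω - 1) * hω) hne
  exact hord ▸ IsPrimitiveRoot.orderOf _

theorem isPrimitiveRoot_omega : IsPrimitiveRoot (ω : EisensteinInt) 3 :=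
  isPrimitiveRoot_map_omega (RingHom.id _) (by norm_num)

theorem star_omega : star (ω : EisensteinInt) = ω ^ 2 := by
  ext <;> simp [pow_two]

theorem im_eq_zero_of_norm_eq_one {u : EisensteinInt} (hu : norm u = 1) (h3 : 3 ∣ u.im) :
    u.im = 0 := by
  obtain ⟨k, hk⟩ := h3
  rw [norm_eq, hk] at hu
  have : k = 0 := by nlinarith [sq_nonneg (2 * u.re - 3 * k)]
  omega

theorem natCast_dvd_mul_star {p : ℕ} {f : EisensteinInt →+* ZMod p} {y z : EisensteinInt}
    (hy : f y = 0) (hz : f z = 0) : (p : EisensteinInt) ∣ y * star z := by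
  have hω := map_omega_sq_add_map_omega_add_one f
  rw [map_eq] at hy hz
  rw [← Int.cast_natCast, ← eq_intCast (algebraMap ℤ EisensteinInt), algebraMap_dvd_iff,
    ← ZMod.intCast_zmod_eq_zero_iff_dvd, ← ZMod.intCast_zmod_eq_zero_iff_dvd]
  simp only [re_mul, im_mul, re_star, im_star]
  push_cast
  constructor
  · linear_combination (z.re - z.im : ZMod p) * hy - y.im * f ω * hz + y.im * z.im * hω
  · linear_combination y.im * hz - z.im * hy

theorem mul_star_eq_star_mul {p : ℕ} (hp : p.Coprime 3) {f : EisensteinInt →+* ZMod p}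
    {y z : EisensteinInt} (hy : f y = 0) (hz : f z = 0) (hpy : norm y = p) (hpz : norm z = p)
    (h3y : 3 ∣ y.im) (h3z : 3 ∣ z.im) : y * star z = star y * z := by
  obtain ⟨u, hu⟩ := natCast_dvd_mul_star hy hz
  have hp0 : (p : ℤ) ≠ 0 := by
    rintro hp0
    simp [Int.natCast_eq_zero.1 hp0] at hp
  have him : (y * star z).im = p * u.im := by simp [hu]
  have hnorm : norm u = 1 := by
    have := congrArg QuadraticAlgebra.norm hu
    rw [map_mul, map_mul, QuadraticAlgebra.norm_star, hpy, hpz,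
      QuadraticAlgebra.norm_natCast, sq] at this
    exact (mul_eq_left₀ (mul_ne_zero hp0 hp0)).1 this.symm
  have h3 : 3 ∣ u.im := by
    have h3p : IsCoprime (3 : ℤ) p := Nat.isCoprime_iff_coprime.2 hp.symm
    refine h3p.dvd_of_dvd_mul_left (him ▸ ?_)
    simp only [im_mul, re_star, im_star]
    exact dvd_add (dvd_add (h3z.neg_right.mul_left _) (h3y.mul_right _))
      ((h3y.mul_left _).mul_right _)
  rw [im_eq_zero_of_norm_eq_one hnorm h3, mul_zero] at him
  calc y * star z = star (y * star z) :=
        QuadraticAlgebra.ext (by rw [re_star, him, mul_zero, add_zero])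
          (by rw [im_star, him, neg_zero])
    _ = star y * z := by rw [star_mul', star_star]

section JacobiSum

variable {F : Type*} [Field F] {χ : MulChar F EisensteinInt}

theorem ringHomComp_starRingEnd (hχ : χ ^ 3 = 1) :
    χ.ringHomComp (starRingEnd EisensteinInt) = χ⁻¹ := by
  refine MulChar.ext fun x ↦ ?_
  have hcube : χ x ^ 3 = 1 := by rw [← MulChar.pow_apply_coe, hχ, MulChar.one_apply_coe]
  obtain ⟨i, -, hi⟩ := isPrimitiveRoot_omega.eq_pow_of_pow_eq_one hcube
  have hinv : χ⁻¹ = χ ^ 2 := inv_eq_of_mul_eq_one_right (by rw [← pow_succ', hχ])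
  rw [MulChar.ringHomComp_apply, starRingEnd_apply, hinv, MulChar.pow_apply_coe, ← hi, star_pow,
    star_omega, pow_right_comm]

variable [Fintype F]

theorem star_jacobiSum (hχ : χ ^ 3 = 1) : star (jacobiSum χ χ) = jacobiSum χ⁻¹ χ⁻¹ := by
  rw [← ringHomComp_starRingEnd hχ, jacobiSum_ringHomComp, starRingEnd_apply]

theorem norm_jacobiSum (hχ : orderOf χ = 3) : norm (jacobiSum χ χ) = Fintype.card F := by
  have hχ3 : χ ^ 3 = 1 := hχ ▸ pow_orderOf_eq_one χ
  let ι := algebraMap EisensteinInt (FractionRing EisensteinInt)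
  have hι : Function.Injective ι := IsFractionRing.injective _ _
  have : CharZero (FractionRing EisensteinInt) := charZero_of_injective_algebraMap hι
  have hχ1 : χ ≠ 1 := by
    rintro rfl
    simp at hχ
  have hχχ : χ * χ ≠ 1 := by
    rw [← sq, Ne, ← orderOf_dvd_iff_pow_eq_one, hχ]
    decide
  have hJ : ι (jacobiSum χ χ) * ι (jacobiSum χ⁻¹ χ⁻¹) = Fintype.card F := by
    rw [← jacobiSum_ringHomComp, ← jacobiSum_ringHomComp, ← MulChar.ringHomComp_inv]
    refine jacobiSum_mul_jacobiSum_inv ?_ ((MulChar.ringHomComp_ne_one_iff hι).2 hχ1)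
      ((MulChar.ringHomComp_ne_one_iff hι).2 hχ1) ?_
    · rw [ringChar.eq_zero]
      exact (CharP.ringChar_ne_zero_of_finite F).symm
    · rwa [← MulChar.ringHomComp_mul, MulChar.ringHomComp_ne_one_iff hι]
  have hJ' : algebraMap ℤ EisensteinInt (norm (jacobiSum χ χ)) =
      algebraMap ℤ EisensteinInt (Fintype.card F) := by
    rw [algebraMap_norm_eq_mul_star, star_jacobiSum hχ3]
    exact hι (by simpa using hJ)
  exact FaithfulSMul.algebraMap_injective ℤ EisensteinInt hJ'

theorem three_dvd_im_jacobiSum (hχ : orderOf χ = 3) : 3 ∣ (jacobiSum χ χ).im := by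
  have hχ3 : χ ^ 3 = 1 := hχ ▸ pow_orderOf_eq_one χ
  obtain ⟨y, -, hy⟩ := exists_jacobiSum_eq_neg_one_add (by decide) hχ3 hχ3
    (hχ ▸ MulChar.orderOf_dvd_card_sub_one F χ) isPrimitiveRoot_omega
  obtain ⟨v, hv⟩ : ∃ v : EisensteinInt, jacobiSum χ χ = -1 + (3 : ℤ) • v := by
    refine ⟨-(y * ω), ?_⟩
    rw [hy, zsmul_eq_mul]
    push_cast
    linear_combination y * omega_sq_add_omega_add_one
  exact ⟨v.im, by simp [hv]⟩

end JacobiSum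

theorem exists_mulChar_jacobiSum_mul_star {p : ℕ} [Fact p.Prime] {f : EisensteinInt →+* ZMod p}
    (hfω : IsPrimitiveRoot (f ω) 3) {z : EisensteinInt} (hz : f z = 0) (hpz : norm z = p)
    (h3z : 3 ∣ z.im) :
    ∃ χ : MulChar (ZMod p) EisensteinInt, orderOf χ = 3 ∧ (∀ x, f (χ x) = x ^ ((p - 1) / 3)) ∧
      jacobiSum χ χ * star z = star (jacobiSum χ χ) * z := by
  obtain ⟨χ, hχ, hfχ⟩ := exists_mulChar_map_eq_pow isPrimitiveRoot_omega hfω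
  rw [ZMod.card] at hfχ
  have hp : 1 < p := (Fact.out : p.Prime).one_lt
  have h3p : 3 ∣ p - 1 := by simpa [hχ] using MulChar.orderOf_dvd_card_sub_one (ZMod p) χ
  have hfJ : f (jacobiSum χ χ) = 0 := by
    refine map_jacobiSum_eq_zero hfχ hfχ ?_
    rw [ZMod.card]
    omega
  have hp3 : p.Coprime 3 := (Nat.coprime_primes Fact.out Nat.prime_three).2 (by omega)
  exact ⟨χ, hχ, hfχ, mul_star_eq_star_mul hp3 hfJ hz (by rw [norm_jacobiSum hχ, ZMod.card]) hpz
    (three_dvd_im_jacobiSum hχ) h3z⟩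

theorem exists_frobenius_cubeRoot_div_star {p q : ℕ} [Fact p.Prime] [Fact q.Prime] (hpq : p ≠ q)
    {ε : ℤˣ} (hqε : q ≡ ε [ZMOD 3]) {f : EisensteinInt →+* ZMod p} (hfω : IsPrimitiveRoot (f ω) 3)
    {K : Type*} [Field K] [IsAlgClosed K] [CharP K q] {κ : EisensteinInt →+* K}
    (hκω : IsPrimitiveRoot (κ ω) 3) {z : EisensteinInt} (hz : f z = 0) (hpz : norm z = p)
    (h3z : 3 ∣ z.im) :
    ∃ x : EisensteinInt, x ^ 3 = 1 ∧ f x = q ^ ((p - 1) / 3) ∧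
      ∃ u : K, u ^ 3 * κ (star z) = κ z ∧ u ^ q = (κ x * u) ^ (ε : ℤ) := by
  have hqp : (q : ZMod p) ≠ 0 := CharP.cast_ne_zero_of_ne_of_prime _ Fact.out hpq
  have hpK : (p : K) ≠ 0 := CharP.cast_ne_zero_of_ne_of_prime K Fact.out hpq.symm
  obtain ⟨χ, hχ, hfχ, hJ⟩ := exists_mulChar_jacobiSum_mul_star hfω hz hpz h3z
  have hχ3 : χ ^ 3 = 1 := hχ ▸ pow_orderOf_eq_one χ
  have hκJ : κ (star (jacobiSum χ χ)) ≠ 0 := by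
    refine right_ne_zero_of_mul (a := κ (jacobiSum χ χ)) ?_
    rwa [map_mul_map_star, norm_jacobiSum hχ, ZMod.card, Int.cast_natCast]
  have hκχ : orderOf (χ.ringHomComp κ) = 3 :=
    (orderOf_ringHomComp isPrimitiveRoot_omega hκω hχ3).trans hχ
  have : NeZero (p : K) := ⟨hpK⟩
  obtain ⟨ξ, hξ⟩ := HasEnoughRootsOfUnity.exists_primitiveRoot K p
  have hψ := AddChar.zmodChar_primitive_of_primitive_root p hξ
  set ψ := AddChar.zmodChar p hξ.pow_eq_one
  have hu := gaussSum_div_gaussSum_inv_pow_three (by rwa [ZMod.card]) hκχ hψ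
  rw [MulChar.ringHomComp_inv, jacobiSum_ringHomComp, jacobiSum_ringHomComp,
    ← star_jacobiSum hχ3, eq_div_iff hκJ] at hu
  refine ⟨χ q, ?_, hfχ q, _, mul_left_cancel₀ hκJ ?_,
    gaussSum_div_gaussSum_inv_pow_char hqp hqε hκχ ψ⟩
  · rw [← MulChar.pow_apply' χ (by decide), hχ3, MulChar.one_apply hqp.isUnit]
  · rw [← map_mul, ← hJ, map_mul, ← hu, MulChar.ringHomComp_inv]
    ring

end EisensteinInt

section Frobenius

variable {K : Type*} [Field K]

theorem map_eq_self_iff_map_cayley {σ : K →+* K} {ε : ℤˣ} {s t : K} (hσs : σ s = (ε : ℤ) * s)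
    (hs : 2 * s ≠ 0) (hadd : t + s ≠ 0) (hsub : t - s ≠ 0) :
    σ t = t ↔ σ ((t - s) / (t + s)) = ((t - s) / (t + s)) ^ (ε : ℤ) := by
  have hσadd : σ t + (ε : ℤ) * s ≠ 0 := by
    rw [← hσs, ← map_add]
    exact (map_ne_zero σ).2 hadd
  rw [map_div₀, map_sub, map_add, hσs]
  rcases Int.units_eq_one_or ε with rfl | rfl <;>
    push_cast [Units.val_neg, Units.val_one] at hσadd ⊢
  · rw [zpow_one, div_eq_div_iff hσadd hadd, ← sub_eq_zero, ← mul_right_inj' hs]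
    exact ⟨fun h ↦ by linear_combination h, fun h ↦ by linear_combination h⟩
  · rw [zpow_neg_one, inv_div, div_eq_div_iff hσadd hsub, ← sub_eq_zero, ← mul_right_inj' hs]
    exact ⟨fun h ↦ by linear_combination -h, fun h ↦ by linear_combination -h⟩

theorem zpow_units_left_inj {a b : K} (ε : ℤˣ) : a ^ (ε : ℤ) = b ^ (ε : ℤ) ↔ a = b := by
  rcases Int.units_eq_one_or ε with rfl | rfl <;> simp

variable {w ζ : K} {q : ℕ} {ε : ℤˣ}

theorem pow_eq_mul_zpow_of_cube_eq (hw : w ^ 3 = 1) (hζ : ζ ^ 3 = w) (hqε : q ≡ 4 * ε [ZMOD 9]) :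
    ζ ^ q = (w * ζ) ^ (ε : ℤ) := by
  have hζ0 : ζ ≠ 0 := by
    rintro rfl
    simp [← hζ] at hw
  obtain ⟨k, hk⟩ := hqε.dvd
  have hζ9 : ζ ^ (9 : ℤ) = 1 := by
    rw [← hζ, ← pow_mul] at hw
    exact_mod_cast hw
  calc ζ ^ q = ζ ^ (4 * ε + 9 * -k : ℤ) := by
        rw [← zpow_natCast]
        congr 1
        omega
    _ = (ζ ^ 3 * ζ) ^ (ε : ℤ) := by
        rw [zpow_add₀ hζ0, zpow_mul, zpow_mul, hζ9, one_zpow, mul_one, ← pow_succ]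
        norm_cast
    _ = (w * ζ) ^ (ε : ℤ) := by rw [hζ]

theorem modEq_three_of_modEq_four_mul_nine {a b : ℤ} (h : a ≡ 4 * b [ZMOD 9]) : a ≡ b [ZMOD 3] :=
  (h.of_dvd (by decide : (3 : ℤ) ∣ 9)).trans (Int.modEq_iff_dvd.2 ⟨-b, by ring⟩)

theorem two_mul_add_one_pow_char [Fact q.Prime] [CharP K q] (hw : w ^ 2 + w + 1 = 0)
    (hqε : q ≡ ε [ZMOD 3]) : (2 * w + 1) ^ q = (ε : ℤ) * (2 * w + 1) := by
  have hw3 : w ^ (3 : ℤ) = 1 := by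
    norm_cast
    linear_combination (w - 1) * hw
  have hw0 : w ≠ 0 := by
    rintro rfl
    simp at hw
  obtain ⟨k, hk⟩ := hqε.dvd
  have hwq : w ^ q = w ^ (ε : ℤ) := by
    rw [← zpow_natCast, show (q : ℤ) = ε + 3 * -k by omega, zpow_add₀ hw0, zpow_mul, hw3, one_zpow,
      mul_one]
  rw [add_pow_char, mul_pow, one_pow, hwq, ← Nat.cast_ofNat, ← frobenius_def, map_natCast]
  rcases Int.units_eq_one_or ε with rfl | rfl
  · simp
  · rw [Units.val_neg, Units.val_one, zpow_neg_one, inv_eq_of_mul_eq_one_right (b := w ^ 2)]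
    · push_cast
      linear_combination 2 * hw
    · rw [← pow_succ']
      exact_mod_cast hw3

theorem exists_cube_eq_ne [IsAlgClosed K] (hw : IsPrimitiveRoot w 3) (u : K) :
    ∃ ζ, ζ ^ 3 = w ∧ ζ ≠ u := by
  obtain ⟨ζ, hζ⟩ := IsAlgClosed.exists_pow_nat_eq w (show 0 < 3 by decide)
  rcases ne_or_eq ζ u with hζu | rfl
  · exact ⟨ζ, hζ, hζu⟩
  · refine ⟨w * ζ, by rw [mul_pow, hw.pow_eq_one, one_mul, hζ], fun h ↦ hw.ne_one (by decide) ?_⟩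
    refine (mul_eq_right₀ ?_).1 h
    rintro rfl
    exact hw.ne_zero (by decide) (by simp [← hζ])

theorem exists_intCast_iff_exists_pow_char_eq_self [Fact q.Prime] [CharP K q] {P : K → Prop} :
    (∃ n : ℤ, P n) ↔ ∃ t : K, t ^ q = t ∧ P t := by
  constructor
  · rintro ⟨n, hn⟩
    refine ⟨n, ?_, hn⟩
    rw [← frobenius_def, map_intCast]
  · rintro ⟨t, ht, hPt⟩
    rw [← Subfield.mem_bot_iff_pow_eq_self, mem_bot_iff_intCast q] at ht
    obtain ⟨n, rfl⟩ := ht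
    exact ⟨n, hPt⟩

theorem exists_pow_char_eq_self_iff_exists_cayley [Fact q.Prime] [CharP K q] {s : K}
    (hsq : s ^ q = (ε : ℤ) * s) (hs : 2 * s ≠ 0) {u : K} (hw : w ≠ 0) (hu : u ≠ 0) :
    (∃ t, t ^ q = t ∧ u ^ 3 * (t + s) ^ 3 = w * (t - s) ^ 3) ↔
      ∃ y ≠ 1, u ^ 3 = w * y ^ 3 ∧ y ^ q = y ^ (ε : ℤ) := by
  have cayley {t : K} (hadd : t + s ≠ 0) (hsub : t - s ≠ 0) :=
    map_eq_self_iff_map_cayley (σ := frobenius K q) hsq hs hadd hsub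
  simp only [frobenius_def] at cayley
  constructor
  · rintro ⟨t, htq, ht⟩
    have hadd : t + s ≠ 0 := by
      intro hadd
      rw [hadd, zero_pow (by decide), mul_zero, zero_eq_mul, or_iff_right hw,
        pow_eq_zero_iff (by decide)] at ht
      exact hs (by linear_combination hadd - ht)
    have hsub : t - s ≠ 0 := by
      intro hsub
      rw [hsub, zero_pow (by decide), mul_zero, mul_eq_zero] at ht
      exact ht.elim (pow_ne_zero 3 hu) (pow_ne_zero 3 hadd)
    refine ⟨(t - s) / (t + s), ?_, ?_, (cayley hadd hsub).1 htq⟩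
    · rw [Ne, div_eq_one_iff_eq hadd]
      exact fun h ↦ hs (by linear_combination -h)
    · rwa [div_pow, ← mul_div_assoc, eq_div_iff (pow_ne_zero 3 hadd)]
  · rintro ⟨y, hy1, huy, hyq⟩
    have hy0 : y ≠ 0 := by
      rintro rfl
      exact hu (by simpa using huy)
    have h1y : 1 - y ≠ 0 := sub_ne_zero.2 hy1.symm
    have hadd : s * (1 + y) / (1 - y) + s = 2 * s / (1 - y) := by field_simp; ring
    have hsub : s * (1 + y) / (1 - y) - s = 2 * s * y / (1 - y) := by field_simp; ring
    refine ⟨s * (1 + y) / (1 - y), (cayley ?_ ?_).2 ?_, ?_⟩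
    · rw [hadd]
      exact div_ne_zero hs h1y
    · rw [hsub]
      exact div_ne_zero (mul_ne_zero hs hy0) h1y
    · rwa [hadd, hsub, div_div_div_cancel_right₀ h1y, mul_div_cancel_left₀ _ hs]
    · rw [hadd, hsub, huy]
      ring

theorem exists_pow_char_eq_zpow_iff [IsAlgClosed K] (hw : IsPrimitiveRoot w 3)
    (hqε : q ≡ 4 * ε [ZMOD 9]) {c u : K} (hu : u ≠ 0) (hcu : u ^ q = (c * u) ^ (ε : ℤ)) :
    (∃ y ≠ 1, u ^ 3 = w * y ^ 3 ∧ y ^ q = y ^ (ε : ℤ)) ↔ c = w := by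
  constructor
  · rintro ⟨y, -, huy, hyq⟩
    have hy0 : y ≠ 0 := by
      rintro rfl
      exact hu (by simpa using huy)
    have hζ : (u / y) ^ 3 = w := by
      rw [div_pow, huy, mul_div_cancel_right₀ _ (pow_ne_zero 3 hy0)]
    have hζq := pow_eq_mul_zpow_of_cube_eq hw.pow_eq_one hζ hqε
    rw [div_pow, hcu, hyq, ← div_zpow, zpow_units_left_inj, mul_div_assoc] at hζq
    exact mul_right_cancel₀ (div_ne_zero hu hy0) hζq
  · rintro rfl
    obtain ⟨ζ, hζ, hζu⟩ := exists_cube_eq_ne hw u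
    have hζ0 : ζ ≠ 0 := by
      rintro rfl
      exact hw.ne_zero (by decide) (by simp [← hζ])
    refine ⟨u / ζ, fun h ↦ hζu ((div_eq_one_iff_eq hζ0).1 h).symm, ?_, ?_⟩
    · rw [div_pow, hζ, mul_div_cancel₀ _ (hw.ne_zero (by decide))]
    · rw [div_pow, hcu, pow_eq_mul_zpow_of_cube_eq hw.pow_eq_one hζ hqε, ← div_zpow,
        mul_div_mul_left _ _ (hw.ne_zero (by decide))]

end Frobenius

namespace EisensteinInt

theorem slope_modEq_iff {K : Type*} [Field K] {q : ℕ} [CharP K q] {κ : EisensteinInt →+* K}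
    (hκω : IsPrimitiveRoot (κ ω) 3) (h2 : (2 : K) ≠ 0) (z : EisensteinInt) (t : ℤ) :
    (t ^ 3 - 3 * t ^ 2 - 9 * t + 3) * (2 * z.re - z.im) ≡
        (t ^ 3 + 9 * t ^ 2 - 9 * t - 9) * z.im [ZMOD q] ↔
      κ z * (t + (2 * κ ω + 1)) ^ 3 = κ ω * κ (star z) * (t - (2 * κ ω + 1)) ^ 3 := by
  have hω := map_omega_sq_add_map_omega_add_one κ
  have hω1 : 1 - κ ω ≠ 0 := sub_ne_zero.2 (hκω.ne_one (by decide)).symm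
  have hscale : 2 * (κ z * (t + (2 * κ ω + 1)) ^ 3 -
        κ ω * κ (star z) * (t - (2 * κ ω + 1)) ^ 3) =
      (1 - κ ω) * ((t ^ 3 - 3 * t ^ 2 - 9 * t + 3) * (2 * z.re - z.im) -
        (t ^ 3 + 9 * t ^ 2 - 9 * t - 9) * z.im) := by
    rw [map_eq κ z, map_eq κ (star z), re_star, im_star]
    push_cast
    grind
  rw [← CharP.intCast_eq_intCast K q, ← sub_eq_zero, ← mul_eq_zero_iff_left hω1]
  push_cast
  rw [← hscale, mul_eq_zero_iff_left h2, sub_eq_zero]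

theorem exists_norm_eq {n L M : ℤ} (h : 4 * n = L ^ 2 + 27 * M ^ 2) :
    ∃ z : EisensteinInt, norm z = n ∧ z.im = 3 * M ∧ 2 * z.re - z.im = L := by
  have heven : Even (L + 3 * M) := (Int.even_pow' two_ne_zero).1
    ⟨2 * n - 9 * M ^ 2 + 3 * L * M, by linear_combination -h⟩
  obtain ⟨a, ha⟩ := heven.two_dvd
  obtain rfl : L = 2 * a - 3 * M := by omega
  refine ⟨⟨a, 3 * M⟩, ?_, rfl, rfl⟩
  rw [norm_eq]
  linarith

theorem intCast_im_ne_zero {p : ℕ} (hp : p.Prime) {z : EisensteinInt} (hz : norm z = p) :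
    (z.im : ZMod p) ≠ 0 := by
  rw [Ne, ZMod.intCast_zmod_eq_zero_iff_dvd]
  intro him
  have hpZ : Prime (p : ℤ) := Nat.prime_iff_prime_int.1 hp
  have hre : (p : ℤ) ∣ z.re := by
    refine hpZ.dvd_of_dvd_pow (n := 2) ?_
    have : z.re ^ 2 = p + z.im * (z.re - z.im) := by linear_combination (norm_eq z).symm.trans hz
    rw [this]
    exact dvd_add dvd_rfl (him.mul_right _)
  have hpz : algebraMap ℤ EisensteinInt p ∣ z := algebraMap_dvd_iff.2 ⟨hre, him⟩
  refine hpZ.not_isUnit (hpZ.irreducible.squarefree p ?_)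
  simpa [hz, sq] using map_dvd QuadraticAlgebra.norm hpz

theorem exists_ringHom_zmod_map_eq_zero {p : ℕ} [Fact p.Prime] {z : EisensteinInt}
    (hz : norm z = p) :
    ∃ f : EisensteinInt →+* ZMod p, f z = 0 ∧ f ω = -z.re * (z.im : ZMod p)⁻¹ := by
  have him := intCast_im_ne_zero Fact.out hz
  have hnorm : (z.re : ZMod p) ^ 2 - z.re * z.im + z.im ^ 2 = 0 := by
    have := congrArg (Int.cast : ℤ → ZMod p) hz
    rw [norm_eq] at this
    push_cast at this
    rwa [ZMod.natCast_self] at this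
  obtain ⟨f, hf⟩ := exists_ringHom_omega_eq (w := -z.re * (z.im : ZMod p)⁻¹) (by
    field_simp
    linear_combination hnorm)
  refine ⟨f, ?_, hf⟩
  rw [map_eq, hf]
  field_simp
  ring

theorem exists_ringHom_isPrimitiveRoot_omega {K : Type*} [Field K] [IsAlgClosed K]
    (h3 : (3 : K) ≠ 0) : ∃ κ : EisensteinInt →+* K, IsPrimitiveRoot (κ ω) 3 := by
  have : NeZero ((3 : ℕ) : K) := ⟨by exact_mod_cast h3⟩
  obtain ⟨w, hw⟩ := HasEnoughRootsOfUnity.exists_primitiveRoot K 3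
  have hsum := hw.geom_sum_eq_zero (by decide)
  simp only [Finset.sum_range_succ, Finset.sum_range_zero, pow_zero, pow_one, zero_add] at hsum
  obtain ⟨κ, rfl⟩ := exists_ringHom_omega_eq (w := w) (by linear_combination hsum)
  exact ⟨κ, hw⟩

theorem exists_slope_modEq_iff {K : Type*} [Field K] [IsAlgClosed K] {q : ℕ} [Fact q.Prime]
    [CharP K q] {κ : EisensteinInt →+* K} (hκω : IsPrimitiveRoot (κ ω) 3) {ε : ℤˣ}
    (hqε : q ≡ 4 * ε [ZMOD 9]) (h2 : (2 : K) ≠ 0) {z : EisensteinInt} (hz : κ (star z) ≠ 0)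
    {c u : K} (hu : u ≠ 0) (huz : u ^ 3 * κ (star z) = κ z)
    (hcu : u ^ q = (c * u) ^ (ε : ℤ)) :
    (∃ t : ℤ, (t ^ 3 - 3 * t ^ 2 - 9 * t + 3) * (2 * z.re - z.im) ≡
        (t ^ 3 + 9 * t ^ 2 - 9 * t - 9) * z.im [ZMOD q]) ↔ c = κ ω := by
  have hqε3 : q ≡ ε [ZMOD 3] := modEq_three_of_modEq_four_mul_nine hqε
  have hω := map_omega_sq_add_map_omega_add_one κ
  have hω0 : κ ω ≠ 0 := hκω.ne_zero (by decide)
  have hs : 2 * (2 * κ ω + 1) ≠ 0 := by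
    have : 2 * κ ω + 1 = κ ω * (1 - κ ω) := by linear_combination hω
    rw [this]
    exact mul_ne_zero h2 (mul_ne_zero hω0 (sub_ne_zero.2 (hκω.ne_one (by decide)).symm))
  have hslope (t : K) : κ z * (t + (2 * κ ω + 1)) ^ 3 =
        κ ω * κ (star z) * (t - (2 * κ ω + 1)) ^ 3 ↔
      u ^ 3 * (t + (2 * κ ω + 1)) ^ 3 = κ ω * (t - (2 * κ ω + 1)) ^ 3 := by
    rw [← huz, mul_right_comm, mul_right_comm (κ ω), mul_left_inj' hz]
  rw [← exists_pow_char_eq_zpow_iff hκω hqε hu hcu, ← exists_pow_char_eq_self_iff_exists_cayley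
    (two_mul_add_one_pow_char hω hqε3) hs hω0 hu, ← exists_intCast_iff_exists_pow_char_eq_self]
  simp only [slope_modEq_iff hκω h2, hslope]

theorem pow_eq_map_omega_iff {p q : ℕ} [Fact p.Prime] [Fact q.Prime] (hpq : p ≠ q)
    {ε : ℤˣ} (hqε : q ≡ 4 * ε [ZMOD 9]) {f : EisensteinInt →+* ZMod p}
    (hfω : IsPrimitiveRoot (f ω) 3) {z : EisensteinInt} (hfz : f z = 0) (hz : norm z = p)
    (h3z : 3 ∣ z.im) :
    (q : ZMod p) ^ ((p - 1) / 3) = f ω ↔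
      ∃ t : ℤ, (t ^ 3 - 3 * t ^ 2 - 9 * t + 3) * (2 * z.re - z.im) ≡
        (t ^ 3 + 9 * t ^ 2 - 9 * t - 9) * z.im [ZMOD q] := by
  let K := AlgebraicClosure (ZMod q)
  have hqε3 : q ≡ ε [ZMOD 3] := modEq_three_of_modEq_four_mul_nine hqε
  have hq : 3 < q := by
    rw [Int.ModEq] at hqε
    rcases Int.units_eq_one_or ε with rfl | rfl <;>
      simp only [Units.val_neg, Units.val_one] at hqε <;> omega
  have hK {n : ℕ} (hn : n.Prime) (hqn : q ≠ n) : (n : K) ≠ 0 :=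
    CharP.cast_ne_zero_of_ne_of_prime K hn hqn
  obtain ⟨κ, hκω⟩ := exists_ringHom_isPrimitiveRoot_omega (K := K)
    (by exact_mod_cast hK Nat.prime_three hq.ne')
  obtain ⟨x, hx3, hfx, u, huz, hxu⟩ :=
    exists_frobenius_cubeRoot_div_star hpq hqε3 hfω hκω hfz hz h3z
  have hzz : κ z * κ (star z) ≠ 0 := by
    rw [map_mul_map_star, hz]
    exact_mod_cast hK Fact.out hpq.symm
  have hu : u ≠ 0 := by
    rintro rfl
    exact left_ne_zero_of_mul hzz (by rw [← huz, zero_pow (by decide), zero_mul])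
  have hω3 := isPrimitiveRoot_omega.pow_eq_one
  rw [exists_slope_modEq_iff hκω hqε (by exact_mod_cast hK Nat.prime_two (by omega))
    (right_ne_zero_of_mul hzz) hu huz hxu, ← hfx,
    (injOn_pow_eq_one_of_isPrimitiveRoot_map isPrimitiveRoot_omega hfω).eq_iff hx3 hω3,
    (injOn_pow_eq_one_of_isPrimitiveRoot_map isPrimitiveRoot_omega hκω).eq_iff hx3 hω3]

end EisensteinInt

/-- For a prime `q > 3` with `q ≡ ±4 (mod 9)` and a prime `p ≡ 1 (mod 3)`, `p ≠ q`,
with `4p = L² + 27M²`: `F_q(L,M) = ω` iff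
`(t³−3t²−9t+3)L ≡ 3(t³+9t²−9t−9)M (mod q)` for some integer `t`. -/
theorem omega_slopes_four_mod_nine (q p : ℕ) (hq : q.Prime) (hq3 : 3 < q)
    (hq9 : q % 9 = 4 ∨ q % 9 = 5)
    (hp : p.Prime) (hp3 : p % 3 = 1) (hpq : p ≠ q)
    (L M : ℤ) (h : (4 * p : ℤ) = L ^ 2 + 27 * M ^ 2) :
    ((q : ZMod p) ^ ((p - 1) / 3) =
        ((-(L + 3 * M) : ℤ) : ZMod p) * (((6 * M : ℤ) : ZMod p))⁻¹) ↔
      ∃ t : ℤ, (t ^ 3 - 3 * t ^ 2 - 9 * t + 3) * L ≡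
        3 * (t ^ 3 + 9 * t ^ 2 - 9 * t - 9) * M [ZMOD (q : ℤ)] := by
  have : Fact q.Prime := ⟨hq⟩
  have : Fact p.Prime := ⟨hp⟩
  obtain ⟨ε, hε⟩ : ∃ ε : ℤˣ, q ≡ 4 * ε [ZMOD 9] := by
    refine hq9.elim (fun h4 ↦ ⟨1, ?_⟩) (fun h5 ↦ ⟨-1, ?_⟩) <;>
      simp only [Int.ModEq, Units.val_neg, Units.val_one] <;> omega
  obtain ⟨z, hz, hM, hL⟩ := EisensteinInt.exists_norm_eq h
  obtain ⟨f, hfz, hfω⟩ := EisensteinInt.exists_ringHom_zmod_map_eq_zero hz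
  have hω : ((-(L + 3 * M) : ℤ) : ZMod p) * ((6 * M : ℤ) : ZMod p)⁻¹ = f ω := by
    rw [hfω, show -(L + 3 * M) = 2 * -z.re by linarith, show 6 * M = 2 * z.im by linarith]
    push_cast
    exact mul_div_mul_left _ _
      (by exact_mod_cast CharP.cast_ne_zero_of_ne_of_prime (ZMod p) Nat.prime_two (by omega))
  have hfω3 : IsPrimitiveRoot (f ω) 3 := EisensteinInt.isPrimitiveRoot_map_omega f
    (by exact_mod_cast CharP.cast_ne_zero_of_ne_of_prime (ZMod p) Nat.prime_three (by omega))
  rw [hω, EisensteinInt.pow_eq_map_omega_iff hpq hε hfω3 hfz hz ⟨M, hM⟩, hL, hM]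
  simp only [mul_left_comm _ (3 : ℤ), mul_assoc]
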